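/- Let (f_n)_{n∈ℕ} be a Lipschitz p-Bessel sequence for the pointed metric space (M, 0) with bound b, let (τ_n)_{n∈ℕ} be a q-Bessel sequence in the Banach space X with bound c, and let (λ_n)_{n∈ℕ} be a bounded scalar sequence. Then for every x ∈ M the series ∑_{n=1}^∞ λ_n f_n(x) τ_n converges in X, and the multiplier T : M → X defined by T x := ∑_{n=1}^∞ λ_n f_n(x) τ_n satisfies T(0) = 0 and is Lipschitz with Lipschitz constant at most b·c·sup_n |λ_n|. -/

import Mathlib

/-!
Testing a finite sum `∑ aᵢ τᵢ` against a functional and applying Hölder's inequality shows that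
`‖∑ aᵢ τᵢ‖ ≤ c (∑ |aᵢ|ᵖ)^(1/p)` by Hahn–Banach. Applied to tails this gives convergence by Cauchy's
criterion, and in the limit it makes the synthesis operator `a ↦ ∑ aᵢ τᵢ` bounded by `c` on `ℓᵖ`.
The multiplier is this operator composed with `x ↦ (λᵢ fᵢ(x))ᵢ`, a Lipschitz map into `ℓᵖ` with
constant `b sup |λᵢ|`.
-/

/-- A `q`-Bessel family in `X` with bound `c`. For conjugate `p`, one can synthesize
`∑ aᵢ τᵢ` from coefficients `a` in `ℓᵖ`. The notion includes `0 ≤ c`, so that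
`c ^ q * ‖F‖ ^ q` is the `q`-th power of `c * ‖F‖`. -/
structure IsBessel (𝕜 : Type*) {ι X : Type*} [NontriviallyNormedField 𝕜]
    [SeminormedAddCommGroup X] [NormedSpace 𝕜 X] (q c : ℝ) (τ : ι → X) : Prop where
  bound_nonneg : 0 ≤ c
  summable : ∀ F : StrongDual 𝕜 X, Summable fun i ↦ ‖F (τ i)‖ ^ q
  tsum_le : ∀ F : StrongDual 𝕜 X, ∑' i, ‖F (τ i)‖ ^ q ≤ c ^ q * ‖F‖ ^ q

/-- A Lipschitz `p`-Bessel family on the pointed space `(M, base)` with bound `b`. For `1 ≤ p` it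
amounts to a `b`-Lipschitz map `x ↦ (f i x)ᵢ` into `ℓᵖ` that sends `base` to `0`. -/
structure IsLipschitzBessel {ι M E : Type*} [PseudoMetricSpace M] [SeminormedAddCommGroup E]
    (base : M) (p b : ℝ) (f : ι → M → E) : Prop where
  bound_nonneg : 0 ≤ b
  map_base : ∀ i, f i base = 0
  summable : ∀ x y, Summable fun i ↦ ‖f i x - f i y‖ ^ p
  tsum_le : ∀ x y, ∑' i, ‖f i x - f i y‖ ^ p ≤ b ^ p * dist x y ^ p

namespace IsBessel

section Functional

variable {ι 𝕜 X : Type*} [NontriviallyNormedField 𝕜] [SeminormedAddCommGroup X] [NormedSpace 𝕜 X]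
  {p q c : ℝ} {τ : ι → X}

lemma rpow_sum_norm_apply_le (hτ : IsBessel 𝕜 q c τ) (hq : 0 < q) (F : StrongDual 𝕜 X)
    (s : Finset ι) : (∑ i ∈ s, ‖F (τ i)‖ ^ q) ^ (1 / q) ≤ c * ‖F‖ := by
  have hc := hτ.bound_nonneg
  rw [one_div, Real.rpow_inv_le_iff_of_pos (by positivity) (by positivity) hq,
    Real.mul_rpow hc (norm_nonneg F)]
  exact ((hτ.summable F).sum_le_tsum s fun _ _ ↦ by positivity).trans (hτ.tsum_le F)

lemma norm_apply_sum_smul_le (hτ : IsBessel 𝕜 q c τ) (hpq : p.HolderConjugate q)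
    (F : StrongDual 𝕜 X) (a : ι → 𝕜) (s : Finset ι) :
    ‖F (∑ i ∈ s, a i • τ i)‖ ≤ c * (∑ i ∈ s, ‖a i‖ ^ p) ^ (1 / p) * ‖F‖ :=
  calc ‖F (∑ i ∈ s, a i • τ i)‖
      ≤ ∑ i ∈ s, ‖a i‖ * ‖F (τ i)‖ := by
        simpa only [map_sum, map_smul, norm_smul] using norm_sum_le s fun i ↦ F (a i • τ i)
    _ ≤ (∑ i ∈ s, ‖a i‖ ^ p) ^ (1 / p) * (∑ i ∈ s, ‖F (τ i)‖ ^ q) ^ (1 / q) :=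
        Real.inner_le_Lp_mul_Lq_of_nonneg s hpq (fun _ _ ↦ norm_nonneg _) fun _ _ ↦ norm_nonneg _
    _ ≤ (∑ i ∈ s, ‖a i‖ ^ p) ^ (1 / p) * (c * ‖F‖) := by
        gcongr
        exact hτ.rpow_sum_norm_apply_le hpq.symm.pos F s
    _ = c * (∑ i ∈ s, ‖a i‖ ^ p) ^ (1 / p) * ‖F‖ := by ring

end Functional

variable {ι 𝕜 X : Type*} [RCLike 𝕜] [SeminormedAddCommGroup X] [NormedSpace 𝕜 X]
  {p q c : ℝ} {τ : ι → X}

lemma norm_sum_smul_rpow_le (hτ : IsBessel 𝕜 q c τ) (hpq : p.HolderConjugate q) (a : ι → 𝕜)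
    (s : Finset ι) : ‖∑ i ∈ s, a i • τ i‖ ^ p ≤ c ^ p * ∑ i ∈ s, ‖a i‖ ^ p := by
  have hc := hτ.bound_nonneg
  have hnorm : ‖∑ i ∈ s, a i • τ i‖ ≤ c * (∑ i ∈ s, ‖a i‖ ^ p) ^ (1 / p) :=
    NormedSpace.norm_le_dual_bound 𝕜 _ (by positivity) fun F ↦
      hτ.norm_apply_sum_smul_le hpq F a s
  calc ‖∑ i ∈ s, a i • τ i‖ ^ p
      ≤ (c * (∑ i ∈ s, ‖a i‖ ^ p) ^ (1 / p)) ^ p :=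
        Real.rpow_le_rpow (norm_nonneg _) hnorm hpq.nonneg
    _ = c ^ p * ∑ i ∈ s, ‖a i‖ ^ p := by
        rw [Real.mul_rpow hc (by positivity), one_div,
          Real.rpow_inv_rpow (by positivity) hpq.ne_zero]

lemma summable_smul [CompleteSpace X] (hτ : IsBessel 𝕜 q c τ) (hpq : p.HolderConjugate q)
    {a : ι → 𝕜} (ha : Summable fun i ↦ ‖a i‖ ^ p) : Summable fun i ↦ a i • τ i := by
  refine summable_iff_vanishing_norm.2 fun ε hε ↦ ?_
  obtain ⟨s, hs⟩ :=
    summable_iff_vanishing_norm.1 (ha.mul_left (c ^ p)) (ε ^ p) (Real.rpow_pos_of_pos hε p)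
  refine ⟨s, fun t ht ↦ (Real.rpow_lt_rpow_iff (norm_nonneg _) hε.le hpq.pos).1 ?_⟩
  calc ‖∑ i ∈ t, a i • τ i‖ ^ p
      ≤ c ^ p * ∑ i ∈ t, ‖a i‖ ^ p := hτ.norm_sum_smul_rpow_le hpq a t
    _ = ∑ i ∈ t, c ^ p * ‖a i‖ ^ p := Finset.mul_sum ..
    _ ≤ ‖∑ i ∈ t, c ^ p * ‖a i‖ ^ p‖ := Real.le_norm_self _
    _ < ε ^ p := hs t ht

lemma norm_rpow_le_of_hasSum (hτ : IsBessel 𝕜 q c τ) (hpq : p.HolderConjugate q)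
    {a : ι → 𝕜} (ha : Summable fun i ↦ ‖a i‖ ^ p) {z : X}
    (hz : HasSum (fun i ↦ a i • τ i) z) : ‖z‖ ^ p ≤ c ^ p * ∑' i, ‖a i‖ ^ p :=
  le_of_tendsto_of_tendsto' (hz.norm.rpow_const (Or.inr hpq.nonneg))
    (ha.hasSum.const_mul (c ^ p)) (hτ.norm_sum_smul_rpow_le hpq a)

end IsBessel

namespace IsLipschitzBessel

lemma summable_norm_rpow {ι M E : Type*} [PseudoMetricSpace M] [SeminormedAddCommGroup E]
    {base : M} {p b : ℝ} {f : ι → M → E} (hf : IsLipschitzBessel base p b f) (x : M) :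
    Summable fun i ↦ ‖f i x‖ ^ p := by
  simpa only [hf.map_base, sub_zero] using hf.summable x base

lemma bounded_mul {ι M R : Type*} [PseudoMetricSpace M] [NonUnitalSeminormedRing R] {base : M}
    {p b L : ℝ} {f : ι → M → R} {lam : ι → R} (hf : IsLipschitzBessel base p b f) (hp : 0 ≤ p)
    (hL : 0 ≤ L) (hlam : ∀ i, ‖lam i‖ ≤ L) :
    IsLipschitzBessel base p (L * b) fun i x ↦ lam i * f i x := by
  have hle (x y : M) (i : ι) :
      ‖lam i * f i x - lam i * f i y‖ ^ p ≤ L ^ p * ‖f i x - f i y‖ ^ p := by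
    rw [← mul_sub, ← Real.mul_rpow hL (norm_nonneg _)]
    gcongr
    exact norm_mul_le_of_le (hlam i) le_rfl
  have hdom (x y : M) : Summable fun i ↦ L ^ p * ‖f i x - f i y‖ ^ p :=
    (hf.summable x y).mul_left _
  have hsum (x y : M) : Summable fun i ↦ ‖lam i * f i x - lam i * f i y‖ ^ p :=
    (hdom x y).of_nonneg_of_le (fun _ ↦ by positivity) (hle x y)
  refine ⟨mul_nonneg hL hf.bound_nonneg, fun i ↦ by rw [hf.map_base, mul_zero], hsum,
    fun x y ↦ ?_⟩
  calc ∑' i, ‖lam i * f i x - lam i * f i y‖ ^ p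
      ≤ ∑' i, L ^ p * ‖f i x - f i y‖ ^ p := (hsum x y).tsum_le_tsum (hle x y) (hdom x y)
    _ = L ^ p * ∑' i, ‖f i x - f i y‖ ^ p := tsum_mul_left
    _ ≤ L ^ p * (b ^ p * dist x y ^ p) := by
        gcongr
        exact hf.tsum_le x y
    _ = (L * b) ^ p * dist x y ^ p := by rw [Real.mul_rpow hL hf.bound_nonneg, mul_assoc]

lemma norm_sub_le_of_hasSum {ι 𝕜 M X : Type*} [RCLike 𝕜] [PseudoMetricSpace M]
    [SeminormedAddCommGroup X] [NormedSpace 𝕜 X] {base : M} {p q b c : ℝ} {f : ι → M → 𝕜}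
    {τ : ι → X} (hf : IsLipschitzBessel base p b f) (hτ : IsBessel 𝕜 q c τ)
    (hpq : p.HolderConjugate q) {x y : M} {u v : X} (hu : HasSum (fun i ↦ f i x • τ i) u)
    (hv : HasSum (fun i ↦ f i y • τ i) v) : ‖u - v‖ ≤ b * c * dist x y := by
  have hb := hf.bound_nonneg
  have hc := hτ.bound_nonneg
  have huv : HasSum (fun i ↦ (f i x - f i y) • τ i) (u - v) := by
    simpa only [sub_smul] using hu.sub hv
  refine (Real.rpow_le_rpow_iff (norm_nonneg _) (by positivity) hpq.pos).1 ?_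
  calc ‖u - v‖ ^ p
      ≤ c ^ p * ∑' i, ‖f i x - f i y‖ ^ p := hτ.norm_rpow_le_of_hasSum hpq (hf.summable x y) huv
    _ ≤ c ^ p * (b ^ p * dist x y ^ p) := by
        gcongr
        exact hf.tsum_le x y
    _ = (b * c * dist x y) ^ p := by
        rw [Real.mul_rpow (by positivity) dist_nonneg, Real.mul_rpow hb hc]
        ring

end IsLipschitzBessel

theorem multiplier_well_defined_general {ι 𝕜 X M : Type*} [RCLike 𝕜] [SeminormedAddCommGroup X]
    [NormedSpace 𝕜 X] [CompleteSpace X] [PseudoMetricSpace M] {base : M} {p q b c : ℝ}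
    (hpq : p.HolderConjugate q) {f : ι → M → 𝕜} (hf : IsLipschitzBessel base p b f)
    {τ : ι → X} (hτ : IsBessel 𝕜 q c τ) {lam : ι → 𝕜}
    (hlam : BddAbove (Set.range fun i ↦ ‖lam i‖)) :
    ∃ T : M → X, (∀ x, HasSum (fun i ↦ (lam i * f i x) • τ i) (T x)) ∧ T base = 0 ∧
      ∀ x y, ‖T x - T y‖ ≤ b * c * (⨆ i, ‖lam i‖) * dist x y := by
  have hlf : IsLipschitzBessel base p ((⨆ i, ‖lam i‖) * b) fun i x ↦ lam i * f i x :=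
    hf.bounded_mul hpq.nonneg (Real.iSup_nonneg fun _ ↦ norm_nonneg _) (le_ciSup hlam)
  have hT (x : M) : HasSum (fun i ↦ (lam i * f i x) • τ i) (∑' i, (lam i * f i x) • τ i) :=
    (hτ.summable_smul hpq (hlf.summable_norm_rpow x)).hasSum
  refine ⟨_, hT, by simp [hf.map_base], fun x y ↦ ?_⟩
  exact (hlf.norm_sub_le_of_hasSum hτ hpq (hT x) (hT y)).trans_eq (by ring)

/-- **Multipliers are well defined**: if `(f_n)` is a Lipschitz p-Bessel sequence for the pointed
metric space `(M, base)` with bound `b`, `(τ_n)` is a q-Bessel sequence in the Banach space `X`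
with bound `c`, and `(λ_n)` is a bounded scalar sequence, then for each `x` the series
`∑ λ_n f_n(x) τ_n` converges in `X`, and the resulting multiplier `T` satisfies `T base = 0`
and is Lipschitz with constant at most `b * c * sup_n ‖λ_n‖`. -/
theorem multiplier_well_defined
    {𝕂 X M : Type*} [RCLike 𝕂] [NormedAddCommGroup X] [NormedSpace 𝕂 X] [CompleteSpace X]
    [MetricSpace M] (base : M)
    (p q : ℝ) (hp : 1 < p) (hpq : 1 / p + 1 / q = 1)
    (f : ℕ → M → 𝕂) (b : ℝ) (hb : 0 < b)
    (hlip : ∀ n, ∃ K, LipschitzWith K (f n)) (hf0 : ∀ n, f n base = 0)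
    (hfb : ∀ x y : M, Summable (fun n => ‖f n x - f n y‖ ^ p) ∧
      ∑' n, ‖f n x - f n y‖ ^ p ≤ b ^ p * dist x y ^ p)
    (τ : ℕ → X) (c : ℝ) (hc : 0 < c)
    (hτ : ∀ F : X →L[𝕂] 𝕂, Summable (fun n => ‖F (τ n)‖ ^ q) ∧
      ∑' n, ‖F (τ n)‖ ^ q ≤ c ^ q * ‖F‖ ^ q)
    (lam : ℕ → 𝕂) (hlam : BddAbove (Set.range fun n => ‖lam n‖)) :
    ∃ T : M → X,
      (∀ x : M, Filter.Tendsto (fun N => ∑ n ∈ Finset.range N, (lam n * f n x) • τ n)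
        Filter.atTop (nhds (T x))) ∧
      T base = 0 ∧
      ∀ x y : M, ‖T x - T y‖ ≤ b * c * (⨆ n, ‖lam n‖) * dist x y := by
  have hconj : p.HolderConjugate q := Real.holderConjugate_iff.2 ⟨hp, by simpa using hpq⟩
  obtain ⟨T, hT, hbase, hdist⟩ := multiplier_well_defined_general hconj
    ⟨hb.le, hf0, fun x y ↦ (hfb x y).1, fun x y ↦ (hfb x y).2⟩
    ⟨hc.le, fun F ↦ (hτ F).1, fun F ↦ (hτ F).2⟩ hlam
  exact ⟨T, fun x ↦ (hT x).tendsto_sum_nat, hbase, hdist⟩
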